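/- Completeness of the lower bounds rule: Let M be a finitely-branching MDP with absorbing terminal state ⊥ and initial state σ, and suppose Pr_term(σ) ≥ 1 − p for some p ∈ [0,1). Then for every ε > 0 there exists a finite set Ψ_ε ⊆ S with σ ∈ Ψ_ε and ⊥ ∈ Ψ_ε such that (Ψ_ε, p + ε) is a stochastic invariant for σ and, for every scheduler 𝔰, ℙ_{𝔰,σ}(the run visits ⊥ or some state of the run lies outside Ψ_ε) = 1. -/

import Mathlib

open scoped ENNReal Classical

/-- A finitely-branching MDP on a state space `S`: each state has a nonempty finite
set of available actions, each a finitely-supported PMF on `S`. -/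
structure MDP (S : Type) where
  act : S → Finset (PMF S)
  act_nonempty : ∀ s, (act s).Nonempty
  act_finSupp : ∀ s, ∀ μ ∈ act s, (μ : PMF S).support.Finite

/-- A scheduler maps every history `(s₀, …, sₙ)` (given as the list of earlier
states `s₀, …, sₙ₋₁` together with the current state `sₙ`) to an available action. -/
structure Scheduler {S : Type} (M : MDP S) where
  choose : List S → S → PMF S
  choose_mem : ∀ hist s, choose hist s ∈ M.act s

namespace MDP

variable {S : Type}

/-- Reachability: `s'` is reachable from `σ` via a finite path each of whose steps
lies in the support of some available action. -/
inductive Reach (M : MDP S) (σ : S) : S → Prop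
  | refl : Reach M σ σ
  | step {s s' : S} (μ : PMF S) : Reach M σ s → μ ∈ M.act s → s' ∈ μ.support → Reach M σ s'

/-- Probability that the run (currently at `s`, with past history `hist`) visits the
set `T` within the next `k` steps, under scheduler `𝔰`. -/
noncomputable def hitProbAux (M : MDP S) (𝔰 : Scheduler M) (T : Set S) :
    ℕ → List S → S → ℝ≥0∞
  | 0, _, s => if s ∈ T then 1 else 0
  | k + 1, hist, s =>
      if s ∈ T then 1
      else ∑' s', (𝔰.choose hist s) s' * hitProbAux M 𝔰 T k (hist ++ [s]) s'

/-- Probability that the run started at `σ` visits `T` within the first `k` steps. -/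
noncomputable def hitProbWithin (M : MDP S) (𝔰 : Scheduler M) (σ : S) (T : Set S)
    (k : ℕ) : ℝ≥0∞ :=
  hitProbAux M 𝔰 T k [] σ

/-- Probability that the run started at `σ` ever visits `T`, under scheduler `𝔰`. -/
noncomputable def hitProb (M : MDP S) (𝔰 : Scheduler M) (σ : S) (T : Set S) : ℝ≥0∞ :=
  ⨆ k, hitProbWithin M 𝔰 σ T k

/-- The terminal state `term` is absorbing: the only action there is the Dirac PMF. -/
def Absorbing (M : MDP S) (term : S) : Prop :=
  M.act term = {PMF.pure term}

/-- Termination probability: infimum over schedulers of the probability of visiting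
the terminal state. -/
noncomputable def PrTerm (M : MDP S) (term σ : S) : ℝ≥0∞ :=
  ⨅ 𝔰 : Scheduler M, hitProb M 𝔰 σ {term}

/-- Almost-sure termination from `σ`. -/
def AST (M : MDP S) (term σ : S) : Prop := PrTerm M term σ = 1

/-- Mass a PMF assigns to a set. -/
noncomputable def mass (μ : PMF S) (A : Set S) : ℝ≥0∞ := ∑' a : A, μ a

/-- Expected value of a real-valued function under a (finitely supported) PMF. -/
noncomputable def expect (μ : PMF S) (V : S → ℝ) : ℝ := ∑' s, (μ s).toReal * V s

/-- `V` is a supermartingale function on the states reachable from `σ`. -/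
def SupermartingaleOn (M : MDP S) (σ : S) (V : S → ℝ) : Prop :=
  ∀ s, M.Reach σ s → ∀ μ ∈ M.act s, expect μ V ≤ V s

/-- `(Ψ, p)` is a stochastic invariant for initial state `σ`: under every scheduler the
probability that the run ever leaves `Ψ` is at most `p`. -/
def StochasticInvariant (M : MDP S) (σ : S) (Ψ : Set S) (p : ℝ) : Prop :=
  ⨆ 𝔰 : Scheduler M, hitProb M 𝔰 σ Ψᶜ ≤ ENNReal.ofReal p

end MDP

/-!
Backward induction over the finitely many actions gives the least probability `v k s` of
terminating within `k` steps from `s`; by monotone convergence its supremum `v s` satisfies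
`∑ μ v ≤ v s` for some available action `μ`, so a memoryless scheduler attains it and
`v σ = Pr_term(σ) ≥ 1 - p`. Choose `k` with `v k σ ≥ 1 - (p + ε)` and let `Ψ` consist of `⊥` and
the states `s` with `v s > 0` that are reachable from `σ` in at most `k` steps. A run that leaves
`Ψ` within its first `k` steps enters a state with `v = 0`, and one that leaves `Ψ` later has not
terminated by time `k`; so the probability of leaving `Ψ` and `v k σ` add up to at most `1`. As `Ψ`
is finite, some `v N` is bounded below on it by a constant `c > 0`: every block of `N` steps
terminates or leaves `Ψ` with conditional probability at least `c`, hence almost surely some block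
does.
-/

namespace MDP

section WeightedSums

variable {α : Type*}

lemma tsum_iSup_of_monotone {ι : Type*} [Preorder ι] [IsDirectedOrder ι] {f : α → ι → ℝ≥0∞}
    (hf : ∀ a, Monotone (f a)) : ∑' a, ⨆ i, f a i = ⨆ i, ∑' a, f a i := by
  simp_rw [ENNReal.tsum_eq_iSup_sum]
  rw [iSup_comm]
  exact iSup_congr fun F => ENNReal.finsetSum_iSup_of_monotone hf

lemma tsum_pmf_mul_le_tsum_mul (μ : PMF α) {f g : α → ℝ≥0∞} (h : ∀ a ∈ μ.support, f a ≤ g a) :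
    ∑' a, μ a * f a ≤ ∑' a, μ a * g a := by
  refine ENNReal.tsum_le_tsum fun a => ?_
  by_cases ha : μ a = 0
  · simp [ha]
  · exact mul_le_mul_right (h a ha) (μ a)

lemma tsum_pmf_mul_const (μ : PMF α) (c : ℝ≥0∞) : ∑' a, μ a * c = c := by
  rw [ENNReal.tsum_mul_right, μ.tsum_coe, one_mul]

lemma tsum_pmf_mul_le (μ : PMF α) {f : α → ℝ≥0∞} {c : ℝ≥0∞} (h : ∀ a ∈ μ.support, f a ≤ c) :
    ∑' a, μ a * f a ≤ c :=
  (tsum_pmf_mul_le_tsum_mul μ h).trans_eq (tsum_pmf_mul_const μ c)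

end WeightedSums

variable {M : MDP S} {T U : Set S} {s : S}

section HitProb

variable (𝔰 : Scheduler M)

lemma hitProbAux_of_mem (hs : s ∈ T) (k : ℕ) (hist : List S) : M.hitProbAux 𝔰 T k hist s = 1 := by
  cases k <;> simp [hitProbAux, hs]

lemma hitProbAux_zero_of_notMem (hs : s ∉ T) (hist : List S) : M.hitProbAux 𝔰 T 0 hist s = 0 := by
  simp [hitProbAux, hs]

lemma hitProbAux_succ_of_notMem (hs : s ∉ T) (k : ℕ) (hist : List S) :
    M.hitProbAux 𝔰 T (k + 1) hist s =
      ∑' s', 𝔰.choose hist s s' * M.hitProbAux 𝔰 T k (hist ++ [s]) s' := by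
  simp [hitProbAux, hs]

lemma hitProbAux_le_of_supermartingale {V : S → ℝ≥0∞} (hT : ∀ s ∈ T, 1 ≤ V s)
    (hV : ∀ hist, ∀ s ∉ T, ∑' s', 𝔰.choose hist s s' * V s' ≤ V s) (k : ℕ) (hist : List S)
    (s : S) : M.hitProbAux 𝔰 T k hist s ≤ V s := by
  induction k generalizing hist s with
  | zero =>
    by_cases hs : s ∈ T
    · exact (hitProbAux_of_mem 𝔰 hs 0 hist).trans_le (hT s hs)
    · simp [hitProbAux_zero_of_notMem 𝔰 hs]
  | succ k ih =>
    by_cases hs : s ∈ T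
    · exact (hitProbAux_of_mem 𝔰 hs (k + 1) hist).trans_le (hT s hs)
    · rw [hitProbAux_succ_of_notMem 𝔰 hs]
      exact (tsum_pmf_mul_le_tsum_mul _ fun s' _ => ih _ s').trans (hV hist s hs)

lemma hitProbAux_le_one (k : ℕ) (hist : List S) (s : S) : M.hitProbAux 𝔰 T k hist s ≤ 1 :=
  hitProbAux_le_of_supermartingale 𝔰 (fun _ _ => le_rfl)
    (fun _ _ _ => tsum_pmf_mul_le _ fun _ _ => le_rfl) k hist s

lemma hitProb_le_one (σ : S) : M.hitProb 𝔰 σ T ≤ 1 :=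
  iSup_le fun k => hitProbAux_le_one 𝔰 k [] σ

lemma hitProbAux_mono (hTU : T ⊆ U) (k : ℕ) (hist : List S) (s : S) :
    M.hitProbAux 𝔰 T k hist s ≤ M.hitProbAux 𝔰 U k hist s := by
  induction k generalizing hist s with
  | zero =>
    by_cases hs : s ∈ T
    · rw [hitProbAux_of_mem 𝔰 hs, hitProbAux_of_mem 𝔰 (hTU hs)]
    · simp [hitProbAux_zero_of_notMem 𝔰 hs]
  | succ k ih =>
    by_cases hs : s ∈ U
    · exact (hitProbAux_le_one 𝔰 _ hist s).trans_eq (hitProbAux_of_mem 𝔰 hs _ hist).symm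
    · rw [hitProbAux_succ_of_notMem 𝔰 hs, hitProbAux_succ_of_notMem 𝔰 fun h => hs (hTU h)]
      exact tsum_pmf_mul_le_tsum_mul _ fun s' _ => ih _ s'

/-- A set of states that no action can leave. It generalizes an absorbing state. -/
def IsTrap (M : MDP S) (T : Set S) : Prop :=
  ∀ s ∈ T, ∀ μ ∈ M.act s, μ.support ⊆ T

lemma Absorbing.isTrap_singleton {t : S} (ht : M.Absorbing t) : M.IsTrap {t} := by
  rintro s rfl μ hμ
  obtain rfl : μ = PMF.pure s := Finset.mem_singleton.1 (ht ▸ hμ)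
  exact (PMF.support_pure s).subset

lemma IsTrap.hitProbAux_eq_zero (hT : M.IsTrap T) (hTU : Disjoint T U) (k : ℕ) (hist : List S)
    (hs : s ∈ T) : M.hitProbAux 𝔰 U k hist s = 0 := by
  have hsU : s ∉ U := hTU.notMem_of_mem_left hs
  induction k generalizing hist s with
  | zero => exact hitProbAux_zero_of_notMem 𝔰 hsU hist
  | succ k ih =>
    rw [hitProbAux_succ_of_notMem 𝔰 hsU, ← nonpos_iff_eq_zero]
    refine tsum_pmf_mul_le _ fun s' hs' => ?_
    have hs'T : s' ∈ T := hT s hs _ (𝔰.choose_mem hist s) hs'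
    exact (ih _ hs'T (hTU.notMem_of_mem_left hs'T)).le

lemma add_mul_hitProbAux_le_hitProbAux_add {a c : ℝ≥0∞} (hac : c + a = 1) {n : ℕ}
    (hc : ∀ hist s, c ≤ M.hitProbAux 𝔰 T n hist s) (k : ℕ) (hist : List S) (s : S) :
    c + a * M.hitProbAux 𝔰 T k hist s ≤ M.hitProbAux 𝔰 T (k + n) hist s := by
  induction k generalizing hist s with
  | zero =>
    by_cases hs : s ∈ T
    · rw [hitProbAux_of_mem 𝔰 hs, hitProbAux_of_mem 𝔰 hs, mul_one, hac]
    · simpa [hitProbAux_zero_of_notMem 𝔰 hs] using hc hist s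
  | succ k ih =>
    by_cases hs : s ∈ T
    · rw [hitProbAux_of_mem 𝔰 hs, hitProbAux_of_mem 𝔰 hs, mul_one, hac]
    rw [Nat.add_right_comm, hitProbAux_succ_of_notMem 𝔰 hs, hitProbAux_succ_of_notMem 𝔰 hs]
    calc c + a * ∑' s', 𝔰.choose hist s s' * M.hitProbAux 𝔰 T k (hist ++ [s]) s'
        = ∑' s', 𝔰.choose hist s s' * (c + a * M.hitProbAux 𝔰 T k (hist ++ [s]) s') := by
          simp_rw [mul_add, ENNReal.tsum_add, tsum_pmf_mul_const, mul_left_comm _ a,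
            ENNReal.tsum_mul_left]
      _ ≤ ∑' s', 𝔰.choose hist s s' * M.hitProbAux 𝔰 T (k + n) (hist ++ [s]) s' :=
          tsum_pmf_mul_le_tsum_mul _ fun s' _ => ih _ s'

lemma hitProb_eq_one_of_forall_le_hitProbAux {c : ℝ≥0∞} (hc0 : c ≠ 0) {n : ℕ}
    (hc : ∀ hist s, c ≤ M.hitProbAux 𝔰 T n hist s) (σ : S) : M.hitProb 𝔰 σ T = 1 := by
  have hc1 : c ≤ 1 := (hc [] σ).trans (hitProbAux_le_one 𝔰 n [] σ)
  have hh1 : M.hitProb 𝔰 σ T ≤ 1 := hitProb_le_one 𝔰 σ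
  obtain ⟨a, hac⟩ := exists_add_of_le hc1
  have ha1 : a ≤ 1 := hac ▸ le_add_self
  have hfix : c + a * M.hitProb 𝔰 σ T ≤ c * M.hitProb 𝔰 σ T + a * M.hitProb 𝔰 σ T :=
    calc c + a * M.hitProb 𝔰 σ T
        = ⨆ k, (c + a * M.hitProbWithin 𝔰 σ T k) := by
          rw [hitProb, ENNReal.mul_iSup, ENNReal.add_iSup]
      _ ≤ M.hitProb 𝔰 σ T := iSup_le fun k =>
          (add_mul_hitProbAux_le_hitProbAux_add 𝔰 hac.symm hc k [] σ).trans
            (le_iSup (M.hitProbWithin 𝔰 σ T) (k + n))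
      _ = c * M.hitProb 𝔰 σ T + a * M.hitProb 𝔰 σ T := by rw [← add_mul, ← hac, one_mul]
  have hfin : a * M.hitProb 𝔰 σ T ≠ ⊤ :=
    ENNReal.mul_ne_top (ne_top_of_le_ne_top ENNReal.one_ne_top ha1)
      (ne_top_of_le_ne_top ENNReal.one_ne_top hh1)
  have hle : c * 1 ≤ c * M.hitProb 𝔰 σ T := by
    simpa only [mul_one] using (ENNReal.add_le_add_iff_right hfin).1 hfix
  exact le_antisymm hh1 <| (ENNReal.mul_le_mul_iff_right hc0
    (ne_top_of_le_ne_top ENNReal.one_ne_top hc1)).1 hle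

end HitProb

section MinHitProb

/-- The least probability of visiting `T` within the next `k` steps from `s`, over all
schedulers, computed by backward induction on `k`. -/
noncomputable def minHitProbWithin (M : MDP S) (T : Set S) : ℕ → S → ℝ≥0∞
  | 0, s => if s ∈ T then 1 else 0
  | k + 1, s =>
      if s ∈ T then 1 else (M.act s).inf fun μ => ∑' s', μ s' * minHitProbWithin M T k s'

/-- The limit of the step-bounded values `minHitProbWithin`. By `iInf_hitProb_eq_minHitProb` it is
the least probability of ever visiting `T` from `s`. -/
noncomputable def minHitProb (M : MDP S) (T : Set S) (s : S) : ℝ≥0∞ :=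
  ⨆ k, M.minHitProbWithin T k s

lemma minHitProbWithin_of_mem (hs : s ∈ T) (k : ℕ) : M.minHitProbWithin T k s = 1 := by
  cases k <;> simp [minHitProbWithin, hs]

lemma minHitProbWithin_zero_of_notMem (hs : s ∉ T) : M.minHitProbWithin T 0 s = 0 := by
  simp [minHitProbWithin, hs]

lemma minHitProbWithin_succ_of_notMem (hs : s ∉ T) (k : ℕ) :
    M.minHitProbWithin T (k + 1) s =
      (M.act s).inf fun μ => ∑' s', μ s' * M.minHitProbWithin T k s' := by
  simp [minHitProbWithin, hs]

lemma minHitProbWithin_succ_le (hs : s ∉ T) (k : ℕ) {μ : PMF S} (hμ : μ ∈ M.act s) :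
    M.minHitProbWithin T (k + 1) s ≤ ∑' s', μ s' * M.minHitProbWithin T k s' :=
  (minHitProbWithin_succ_of_notMem hs k).trans_le (Finset.inf_le hμ)

lemma minHitProbWithin_le_one (k : ℕ) (s : S) : M.minHitProbWithin T k s ≤ 1 := by
  induction k generalizing s with
  | zero =>
    by_cases hs : s ∈ T
    · exact (minHitProbWithin_of_mem hs 0).le
    · simp [minHitProbWithin_zero_of_notMem hs]
  | succ k ih =>
    by_cases hs : s ∈ T
    · exact (minHitProbWithin_of_mem hs (k + 1)).le
    · obtain ⟨μ, hμ⟩ := M.act_nonempty s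
      exact (minHitProbWithin_succ_le hs k hμ).trans (tsum_pmf_mul_le μ fun s' _ => ih s')

lemma minHitProbWithin_le_hitProbAux (𝔰 : Scheduler M) (k : ℕ) (hist : List S) (s : S) :
    M.minHitProbWithin T k s ≤ M.hitProbAux 𝔰 T k hist s := by
  induction k generalizing hist s with
  | zero => rfl
  | succ k ih =>
    by_cases hs : s ∈ T
    · rw [minHitProbWithin_of_mem hs, hitProbAux_of_mem 𝔰 hs]
    · rw [hitProbAux_succ_of_notMem 𝔰 hs]
      exact (minHitProbWithin_succ_le hs k (𝔰.choose_mem hist s)).trans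
        (tsum_pmf_mul_le_tsum_mul _ fun s' _ => ih _ s')

lemma minHitProbWithin_mono (M : MDP S) (T : Set S) (s : S) :
    Monotone fun k => M.minHitProbWithin T k s := by
  refine monotone_nat_of_le_succ fun k => ?_
  induction k generalizing s with
  | zero =>
    by_cases hs : s ∈ T
    · rw [minHitProbWithin_of_mem hs, minHitProbWithin_of_mem hs]
    · simp [minHitProbWithin_zero_of_notMem hs]
  | succ k ih =>
    by_cases hs : s ∈ T
    · rw [minHitProbWithin_of_mem hs, minHitProbWithin_of_mem hs]
    · rw [minHitProbWithin_succ_of_notMem hs, minHitProbWithin_succ_of_notMem hs]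
      exact Finset.inf_mono_fun fun μ _ => tsum_pmf_mul_le_tsum_mul μ fun s' _ => ih s'

lemma minHitProbWithin_le_minHitProb (k : ℕ) (s : S) :
    M.minHitProbWithin T k s ≤ M.minHitProb T s :=
  le_iSup (fun k => M.minHitProbWithin T k s) k

lemma minHitProb_of_mem (hs : s ∈ T) : M.minHitProb T s = 1 := by
  simp [minHitProb, minHitProbWithin_of_mem hs]

lemma minHitProb_lt_top (s : S) : M.minHitProb T s < ⊤ :=
  (iSup_le fun k => minHitProbWithin_le_one k s).trans_lt ENNReal.one_lt_top

lemma eventually_lt_minHitProbWithin {b : ℝ≥0∞} (hb : b < M.minHitProb T s) :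
    ∀ᶠ k in Filter.atTop, b < M.minHitProbWithin T k s :=
  (tendsto_atTop_iSup (minHitProbWithin_mono M T s)).eventually_const_lt hb

lemma eventually_lt_tsum_pmf_mul_minHitProbWithin {μ : PMF S} {b : ℝ≥0∞}
    (hb : b < ∑' s, μ s * M.minHitProb T s) :
    ∀ᶠ k in Filter.atTop, b < ∑' s, μ s * M.minHitProbWithin T k s := by
  have hmono (s : S) : Monotone fun k => μ s * M.minHitProbWithin T k s :=
    (minHitProbWithin_mono M T s).const_mul' (μ s)
  have hsup : ∑' s, μ s * M.minHitProb T s = ⨆ k, ∑' s, μ s * M.minHitProbWithin T k s := by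
    simp_rw [minHitProb, ENNReal.mul_iSup]
    exact tsum_iSup_of_monotone hmono
  exact (tendsto_atTop_iSup fun i j hij => ENNReal.tsum_le_tsum fun s =>
    hmono s hij).eventually_const_lt (hsup ▸ hb)

lemma exists_mem_act_tsum_mul_minHitProb_le (hs : s ∉ T) :
    ∃ μ ∈ M.act s, ∑' s', μ s' * M.minHitProb T s' ≤ M.minHitProb T s := by
  by_contra! hlt
  -- As there are finitely many actions, all of them are already worse at a common finite horizon.
  obtain ⟨k, hk⟩ := ((M.act s).eventually_all.2 fun μ hμ =>
    eventually_lt_tsum_pmf_mul_minHitProbWithin (hlt μ hμ)).exists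
  have hsucc : M.minHitProb T s < M.minHitProbWithin T (k + 1) s := by
    rw [minHitProbWithin_succ_of_notMem hs]
    exact (Finset.lt_inf_iff (minHitProb_lt_top s)).2 hk
  exact hsucc.not_ge (minHitProbWithin_le_minHitProb (k + 1) s)

lemma exists_scheduler_hitProb_le_minHitProb (M : MDP S) (T : Set S) :
    ∃ 𝔰 : Scheduler M, ∀ s, M.hitProb 𝔰 s T ≤ M.minHitProb T s := by
  have hopt : ∀ s, ∃ μ ∈ M.act s, s ∉ T → ∑' s', μ s' * M.minHitProb T s' ≤ M.minHitProb T s := by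
    intro s
    by_cases hs : s ∈ T
    · obtain ⟨μ, hμ⟩ := M.act_nonempty s
      exact ⟨μ, hμ, fun h => absurd hs h⟩
    · obtain ⟨μ, hμ, hle⟩ := exists_mem_act_tsum_mul_minHitProb_le hs
      exact ⟨μ, hμ, fun _ => hle⟩
  choose action haction hle using hopt
  let 𝔰 : Scheduler M := ⟨fun _ => action, fun _ => haction⟩
  exact ⟨𝔰, fun s => iSup_le fun k => hitProbAux_le_of_supermartingale 𝔰
    (fun _ hs => (minHitProb_of_mem hs).ge) (fun _ => hle) k [] s⟩

lemma iInf_hitProb_eq_minHitProb (M : MDP S) (T : Set S) (s : S) :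
    ⨅ 𝔰 : Scheduler M, M.hitProb 𝔰 s T = M.minHitProb T s := by
  obtain ⟨𝔰, h𝔰⟩ := exists_scheduler_hitProb_le_minHitProb M T
  exact le_antisymm (iInf_le_of_le 𝔰 (h𝔰 s)) <|
    le_iInf fun 𝔰' => iSup_mono fun k => minHitProbWithin_le_hitProbAux 𝔰' k [] s

lemma exists_pos_forall_mem_le_minHitProbWithin {Ψ : Set S} (hΨ : Ψ.Finite)
    (hpos : ∀ s ∈ Ψ, 0 < M.minHitProb T s) :
    ∃ c > 0, ∃ n, ∀ s ∈ Ψ, c ≤ M.minHitProbWithin T n s := by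
  obtain ⟨n, hn⟩ := (hΨ.eventually_all.2 fun s hs => eventually_lt_minHitProbWithin
    (hpos s hs)).exists
  refine ⟨hΨ.toFinset.inf (M.minHitProbWithin T n), ?_, n, fun s hs => ?_⟩
  · exact (Finset.lt_inf_iff ENNReal.zero_lt_top).2 fun s hs => hn s (hΨ.mem_toFinset.1 hs)
  · exact Finset.inf_le (hΨ.mem_toFinset.2 hs)

lemma hitProb_union_compl_eq_one {Ψ : Set S} (hΨ : Ψ.Finite)
    (hpos : ∀ s ∈ Ψ, 0 < M.minHitProb T s) (𝔰 : Scheduler M) (σ : S) :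
    M.hitProb 𝔰 σ (T ∪ Ψᶜ) = 1 := by
  obtain ⟨c, hc0, n, hc⟩ := exists_pos_forall_mem_le_minHitProbWithin hΨ hpos
  refine hitProb_eq_one_of_forall_le_hitProbAux 𝔰 (lt_min one_pos hc0).ne' (n := n)
    (fun hist s => ?_) σ
  by_cases hs : s ∈ Ψ
  · calc min 1 c ≤ M.minHitProbWithin T n s := (min_le_right 1 c).trans (hc s hs)
      _ ≤ M.hitProbAux 𝔰 T n hist s := minHitProbWithin_le_hitProbAux 𝔰 n hist s
      _ ≤ M.hitProbAux 𝔰 (T ∪ Ψᶜ) n hist s := hitProbAux_mono 𝔰 Set.subset_union_left n hist s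
  · rw [hitProbAux_of_mem 𝔰 (Or.inr hs)]
    exact min_le_left 1 c

end MinHitProb

section StochasticInvariant

/-- The states that can be reached from `s` in at most `k` steps (cf. `Reach`). The recursion is on
the first step of the path because the estimates are proved by induction along the run. -/
def reachWithin (M : MDP S) : ℕ → S → Set S
  | 0, s => {s}
  | k + 1, s => {s} ∪ ⋃ μ ∈ M.act s, ⋃ s' ∈ μ.support, reachWithin M k s'

lemma mem_reachWithin_self (M : MDP S) (k : ℕ) (s : S) : s ∈ M.reachWithin k s := by
  cases k <;> simp [reachWithin]

lemma reachWithin_subset_reachWithin_succ {μ : PMF S} (hμ : μ ∈ M.act s) {s' : S}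
    (hs' : s' ∈ μ.support) (k : ℕ) : M.reachWithin k s' ⊆ M.reachWithin (k + 1) s :=
  fun _ h => Or.inr <| Set.mem_biUnion hμ <| Set.mem_biUnion hs' h

lemma finite_reachWithin (M : MDP S) (k : ℕ) (s : S) : (M.reachWithin k s).Finite := by
  induction k generalizing s with
  | zero => exact Set.finite_singleton s
  | succ k ih =>
    exact (Set.finite_singleton s).union <| (M.act s).finite_toSet.biUnion fun μ hμ =>
      (M.act_finSupp s μ hμ).biUnion fun s' _ => ih s'

lemma hitProbAux_succ_add_minHitProbWithin_succ_le (𝔰 : Scheduler M) (hsU : s ∉ U) (hsT : s ∉ T)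
    (n k : ℕ) (hist : List S) :
    M.hitProbAux 𝔰 U (n + 1) hist s + M.minHitProbWithin T (k + 1) s ≤
      ∑' s', 𝔰.choose hist s s' *
        (M.hitProbAux 𝔰 U n (hist ++ [s]) s' + M.minHitProbWithin T k s') := by
  simp_rw [mul_add, ENNReal.tsum_add]
  exact add_le_add (hitProbAux_succ_of_notMem 𝔰 hsU n hist).le
    (minHitProbWithin_succ_le hsT k (𝔰.choose_mem hist s))

lemma IsTrap.hitProbAux_compl_add_minHitProbWithin_le_one {Ψ : Set S} (hT : M.IsTrap T)
    (hTΨ : T ⊆ Ψ) (𝔰 : Scheduler M) {k : ℕ} (n : ℕ) (hist : List S)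
    (hΨ : ∀ s' ∈ M.reachWithin k s, M.minHitProb T s' ≠ 0 → s' ∈ Ψ) :
    M.hitProbAux 𝔰 Ψᶜ n hist s + M.minHitProbWithin T k s ≤ 1 := by
  have htrap : ∀ k n hist, ∀ s ∈ T,
      M.hitProbAux 𝔰 Ψᶜ n hist s + M.minHitProbWithin T k s ≤ 1 := by
    intro k n hist s hs
    rw [hT.hitProbAux_eq_zero 𝔰 (Set.disjoint_compl_right_iff_subset.2 hTΨ) n hist hs, zero_add]
    exact minHitProbWithin_le_one k s
  induction k generalizing s n hist with
  | zero =>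
    by_cases hsT : s ∈ T
    · exact htrap 0 n hist s hsT
    · rw [minHitProbWithin_zero_of_notMem hsT, add_zero]
      exact hitProbAux_le_one 𝔰 n hist s
  | succ k ih =>
    by_cases hsT : s ∈ T
    · exact htrap (k + 1) n hist s hsT
    by_cases hsΨ : s ∈ Ψ
    · have hsΨc : s ∉ Ψᶜ := Set.notMem_compl_iff.2 hsΨ
      cases n with
      | zero =>
        rw [hitProbAux_zero_of_notMem 𝔰 hsΨc, zero_add]
        exact minHitProbWithin_le_one (k + 1) s
      | succ n =>
        refine (hitProbAux_succ_add_minHitProbWithin_succ_le 𝔰 hsΨc hsT n k hist).trans ?_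
        refine tsum_pmf_mul_le _ fun s' hs' => ih n (hist ++ [s]) fun s'' hs'' => hΨ s'' ?_
        exact reachWithin_subset_reachWithin_succ (𝔰.choose_mem hist s) hs' k hs''
    · have hmin : M.minHitProb T s = 0 :=
        by_contra fun h => hsΨ (hΨ s (mem_reachWithin_self M (k + 1) s) h)
      have hmink : M.minHitProbWithin T (k + 1) s = 0 :=
        nonpos_iff_eq_zero.1 ((minHitProbWithin_le_minHitProb (k + 1) s).trans_eq hmin)
      rw [hmink, add_zero]
      exact hitProbAux_le_one 𝔰 n hist s

lemma IsTrap.stochasticInvariant {Ψ : Set S} (hT : M.IsTrap T) (hTΨ : T ⊆ Ψ) {k : ℕ} {σ : S}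
    (hΨ : ∀ s ∈ M.reachWithin k σ, M.minHitProb T s ≠ 0 → s ∈ Ψ) {p : ℝ}
    (hp : ENNReal.ofReal (1 - p) ≤ M.minHitProbWithin T k σ) : M.StochasticInvariant σ Ψ p := by
  refine iSup_le fun 𝔰 => iSup_le fun n => ?_
  have hsum : M.hitProbWithin 𝔰 σ Ψᶜ n + ENNReal.ofReal (1 - p) ≤
      ENNReal.ofReal p + ENNReal.ofReal (1 - p) :=
    calc M.hitProbWithin 𝔰 σ Ψᶜ n + ENNReal.ofReal (1 - p)
        ≤ M.hitProbAux 𝔰 Ψᶜ n [] σ + M.minHitProbWithin T k σ := add_le_add_right hp _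
      _ ≤ 1 := hT.hitProbAux_compl_add_minHitProbWithin_le_one hTΨ 𝔰 n [] hΨ
      _ = ENNReal.ofReal (p + (1 - p)) := by simp
      _ ≤ ENNReal.ofReal p + ENNReal.ofReal (1 - p) := ENNReal.ofReal_add_le
  exact (ENNReal.add_le_add_iff_right ENNReal.ofReal_ne_top).1 hsum

end StochasticInvariant

end MDP

theorem lower_bound_rule_complete_general {S : Type} (M : MDP S) (term σ : S)
    (hterm : M.Absorbing term) (p : ℝ) (hp1 : p < 1)
    (hlb : ENNReal.ofReal (1 - p) ≤ M.PrTerm term σ) :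
    ∀ ε : ℝ, 0 < ε → ∃ Ψ : Set S, Ψ.Finite ∧ σ ∈ Ψ ∧ term ∈ Ψ ∧
      M.StochasticInvariant σ Ψ (p + ε) ∧
      ∀ 𝔰 : Scheduler M, M.hitProb 𝔰 σ ({term} ∪ Ψᶜ) = 1 := by
  intro ε hε
  have hval : ENNReal.ofReal (1 - p) ≤ M.minHitProb {term} σ :=
    hlb.trans_eq (MDP.iInf_hitProb_eq_minHitProb M {term} σ)
  have hgap : ENNReal.ofReal (1 - (p + ε)) < M.minHitProb {term} σ :=
    ((ENNReal.ofReal_lt_ofReal_iff (by linarith)).2 (by linarith)).trans_le hval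
  obtain ⟨k, hk⟩ := (MDP.eventually_lt_minHitProbWithin hgap).exists
  let Ψ : Set S := {term} ∪ {s ∈ M.reachWithin k σ | M.minHitProb {term} s ≠ 0}
  have hfin : Ψ.Finite :=
    (Set.finite_singleton term).union ((M.finite_reachWithin k σ).sep _)
  have hpos : ∀ s ∈ Ψ, 0 < M.minHitProb {term} s := by
    rintro s (hs | hs)
    · simp [MDP.minHitProb_of_mem hs]
    · exact pos_iff_ne_zero.2 hs.2
  have hσ : σ ∈ Ψ := Or.inr ⟨M.mem_reachWithin_self k σ, hgap.ne_bot⟩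
  have hinv : M.StochasticInvariant σ Ψ (p + ε) :=
    hterm.isTrap_singleton.stochasticInvariant (Ψ := Ψ) Set.subset_union_left
      (fun s hs hs0 => Or.inr ⟨hs, hs0⟩) hk.le
  exact ⟨Ψ, hfin, hσ, Or.inl rfl, hinv,
    fun 𝔰 => MDP.hitProb_union_compl_eq_one hfin hpos 𝔰 σ⟩

/-- **Completeness of the lower bounds rule.** If the termination probability from `σ` is
at least `1 - p` with `p < 1`, then for every `ε > 0` there is a finite set `Ψ` containing
`σ` and the terminal state such that `(Ψ, p + ε)` is a stochastic invariant for `σ` and,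
under every scheduler, the run almost surely either visits the terminal state or
leaves `Ψ`. -/
theorem lower_bound_rule_complete {S : Type} [Countable S] (M : MDP S) (term σ : S)
    (hterm : M.Absorbing term)
    (p : ℝ) (hp0 : 0 ≤ p) (hp1 : p < 1)
    (hlb : ENNReal.ofReal (1 - p) ≤ M.PrTerm term σ) :
    ∀ ε : ℝ, 0 < ε → ∃ Ψ : Set S, Ψ.Finite ∧ σ ∈ Ψ ∧ term ∈ Ψ ∧
      M.StochasticInvariant σ Ψ (p + ε) ∧
      ∀ 𝔰 : Scheduler M, M.hitProb 𝔰 σ ({term} ∪ Ψᶜ) = 1 := by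
  exact lower_bound_rule_complete_general M term σ hterm p hp1 hlb
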